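/- Let H be a real Hilbert space, A : H → Set H monotone, D : H → H monotone, and B : H → H monotone. Let ε₁, ε₂, β₁, β₂ > 0 and suppose z₁, z₂ ∈ H satisfy 0 ∈ A z_i + D z_i + ε_i z_i + β_i B z_i for i = 1, 2. Then ‖z₂ − z₁‖ ≤ (|β₂ − β₁| / ε₁) ‖B z₁‖ + (|ε₂ − ε₁| / ε₁) ‖z₂‖. -/

import Mathlib

open scoped RealInnerProductSpace

/-!
For a monotone operator `T`, the operator `T + ε • id` expands distances by a factor at least `ε`,
so its inverse is `ε⁻¹`-Lipschitz. With `T = A + D + β₂ • B`, both points solve equations for the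
same operator: `(β₂ - β₁) • B z₁ ∈ T z₁ + ε₁ • z₁` and `(ε₁ - ε₂) • z₂ ∈ T z₂ + ε₁ • z₂`.
The Lipschitz bound and the triangle inequality give the estimate.
-/

section MonotoneOperator

open scoped Pointwise

variable {H : Type*} [SeminormedAddCommGroup H] [InnerProductSpace ℝ H]

/-- Monotonicity of a set-valued operator on a real inner product space. The set `A x` may be empty,
so operators defined only on part of `H` are included. -/
def IsMonotoneOperator (A : H → Set H) : Prop :=
  ∀ ⦃x y u v : H⦄, u ∈ A x → v ∈ A y → 0 ≤ ⟪u - v, x - y⟫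

namespace IsMonotoneOperator

variable {A B : H → Set H}

theorem singleton {D : H → H} (hD : ∀ x y, 0 ≤ ⟪D x - D y, x - y⟫) :
    IsMonotoneOperator fun x ↦ {D x} := by
  rintro x y _ _ rfl rfl
  exact hD x y

theorem add (hA : IsMonotoneOperator A) (hB : IsMonotoneOperator B) :
    IsMonotoneOperator (A + B) := by
  rintro x y _ _ ⟨a, ha, b, hb, rfl⟩ ⟨a', ha', b', hb', rfl⟩
  change 0 ≤ ⟪a + b - (a' + b'), x - y⟫
  rw [add_sub_add_comm, inner_add_left]
  exact add_nonneg (hA ha ha') (hB hb hb')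

theorem smul (hA : IsMonotoneOperator A) {c : ℝ} (hc : 0 ≤ c) : IsMonotoneOperator (c • A) := by
  rintro x y _ _ ⟨a, ha, rfl⟩ ⟨a', ha', rfl⟩
  change 0 ≤ ⟪c • a - c • a', x - y⟫
  rw [← smul_sub, real_inner_smul_left]
  exact mul_nonneg hc (hA ha ha')

theorem mul_norm_sub_le (hA : IsMonotoneOperator A) {x y u v : H} (hu : u ∈ A x) (hv : v ∈ A y)
    (ε : ℝ) : ε * ‖x - y‖ ≤ ‖(u + ε • x) - (v + ε • y)‖ := by
  obtain h | h := (norm_nonneg (x - y)).eq_or_lt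
  · simp [← h]
  refine le_of_mul_le_mul_right ?_ h
  calc ε * ‖x - y‖ * ‖x - y‖
      ≤ ⟪u - v, x - y⟫ + ε * ‖x - y‖ * ‖x - y‖ := le_add_of_nonneg_left (hA hu hv)
    _ = ⟪(u + ε • x) - (v + ε • y), x - y⟫ := by
      rw [add_sub_add_comm, ← smul_sub, inner_add_left, real_inner_smul_left,
        real_inner_self_eq_norm_mul_norm, mul_assoc]
    _ ≤ ‖(u + ε • x) - (v + ε • y)‖ * ‖x - y‖ := real_inner_le_norm _ _

end IsMonotoneOperator

theorem solution_map_joint_estimate_general {A B : H → Set H}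
    (hA : IsMonotoneOperator A) (hB : IsMonotoneOperator B)
    {ε₁ ε₂ β₁ β₂ : ℝ} (hε₁ : 0 < ε₁) (hβ₂ : 0 ≤ β₂) {z₁ z₂ a₁ a₂ b₁ b₂ : H}
    (ha₁ : a₁ ∈ A z₁) (hb₁ : b₁ ∈ B z₁) (hz₁ : a₁ + ε₁ • z₁ + β₁ • b₁ = 0)
    (ha₂ : a₂ ∈ A z₂) (hb₂ : b₂ ∈ B z₂) (hz₂ : a₂ + ε₂ • z₂ + β₂ • b₂ = 0) :
    ‖z₂ - z₁‖ ≤ (|β₂ - β₁| / ε₁) * ‖b₁‖ + (|ε₂ - ε₁| / ε₁) * ‖z₂‖ := by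
  have hT : IsMonotoneOperator (A + β₂ • B) := hA.add (hB.smul hβ₂)
  have hT₁ : a₁ + β₂ • b₁ ∈ (A + β₂ • B) z₁ := Set.add_mem_add ha₁ (Set.smul_mem_smul_set hb₁)
  have hT₂ : a₂ + β₂ • b₂ ∈ (A + β₂ • B) z₂ := Set.add_mem_add ha₂ (Set.smul_mem_smul_set hb₂)
  have hr₁ : a₁ + β₂ • b₁ + ε₁ • z₁ = (β₂ - β₁) • b₁ := by
    linear_combination (norm := module) hz₁
  have hr₂ : a₂ + β₂ • b₂ + ε₁ • z₂ = -((ε₂ - ε₁) • z₂) := by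
    linear_combination (norm := module) hz₂
  have key : ε₁ * ‖z₂ - z₁‖ ≤ |β₂ - β₁| * ‖b₁‖ + |ε₂ - ε₁| * ‖z₂‖ :=
    calc ε₁ * ‖z₂ - z₁‖
        ≤ ‖-((ε₂ - ε₁) • z₂) - (β₂ - β₁) • b₁‖ := by
          simpa only [hr₁, hr₂] using hT.mul_norm_sub_le hT₂ hT₁ ε₁
      _ ≤ ‖(ε₂ - ε₁) • z₂‖ + ‖(β₂ - β₁) • b₁‖ := by
          simpa only [norm_neg] using norm_sub_le (-((ε₂ - ε₁) • z₂)) ((β₂ - β₁) • b₁)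
      _ = |β₂ - β₁| * ‖b₁‖ + |ε₂ - ε₁| * ‖z₂‖ := by
          rw [norm_smul, norm_smul, Real.norm_eq_abs, Real.norm_eq_abs, add_comm]
  calc ‖z₂ - z₁‖ ≤ (|β₂ - β₁| * ‖b₁‖ + |ε₂ - ε₁| * ‖z₂‖) / ε₁ := (le_div_iff₀' hε₁).2 key
    _ = (|β₂ - β₁| / ε₁) * ‖b₁‖ + (|ε₂ - ε₁| / ε₁) * ‖z₂‖ := by ring

end MonotoneOperator

/-- joint Lipschitz-type estimate for the solution map `(ε,β) ↦ x̄(ε,β)`. -/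
theorem solution_map_joint_estimate
    {H : Type*} [NormedAddCommGroup H] [InnerProductSpace ℝ H]
    (A : H → Set H) (D B : H → H)
    (hAmono : ∀ ⦃x y u v : H⦄, u ∈ A x → v ∈ A y → (0:ℝ) ≤ ⟪u - v, x - y⟫)
    (hDmono : ∀ x y : H, (0:ℝ) ≤ ⟪D x - D y, x - y⟫)
    (hBmono : ∀ x y : H, (0:ℝ) ≤ ⟪B x - B y, x - y⟫)
    (ε₁ ε₂ β₁ β₂ : ℝ) (hε₁ : 0 < ε₁) (hε₂ : 0 < ε₂) (hβ₁ : 0 < β₁) (hβ₂ : 0 < β₂)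
    (z₁ z₂ a₁ a₂ : H)
    (ha₁ : a₁ ∈ A z₁) (hz₁ : a₁ + D z₁ + ε₁ • z₁ + β₁ • B z₁ = 0)
    (ha₂ : a₂ ∈ A z₂) (hz₂ : a₂ + D z₂ + ε₂ • z₂ + β₂ • B z₂ = 0) :
    ‖z₂ - z₁‖ ≤ (|β₂ - β₁| / ε₁) * ‖B z₁‖ + (|ε₂ - ε₁| / ε₁) * ‖z₂‖ :=
  solution_map_joint_estimate_general (.add hAmono (.singleton hDmono)) (.singleton hBmono)
    hε₁ hβ₂.le (Set.add_mem_add ha₁ rfl) rfl hz₁ (Set.add_mem_add ha₂ rfl) rfl hz₂
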